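/- arXiv:0811.2777 — 2 statements merged into one kernel-verified Lean document; each statement's English description precedes it below -/
import Mathlib

section
/- The group Γ is contracting with nucleus N: (i) N is state-closed, i.e. for every g ∈ N and every letter x ∈ X the section g|_x belongs to N; (ii) for every g ∈ Γ there exists n₀ such that for every word v ∈ X* of length at least n₀ the section g|_v belongs to N; and (iii) N is the smallest subset of Γ satisfying (ii), i.e. every subset N' ⊆ Γ such that for each g ∈ Γ all sections g|_v at sufficiently long words v lie in N' must contain N. -/
/-!
The proof is structural: no enumeration of the (finite) nucleus is needed. Write `A, B, C, A₁, B₁, C₁`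
for the six subgroups and record an element `g` through its wreath decomposition: a permutation of
the first letter together with the four sections `(g₁, g₂, g₃, g₄)`.

*State-closedness.* Reading off the sections of the generators shows that the sections of the
elements at the four letters lie in
`A : (C, C₁, A₁, A)`, `B : (A ∩ C, …)`, `C : (B, …)`, `A₁ : (C₁ ∩ C, C₁ ∩ C, A₁ ∩ A, A₁ ∩ A)`,
`B₁ : (A₁ ∩ C, C₁ ∩ A, A₁ ∩ C, C₁ ∩ A)`, `C₁ : (B₁, B, B, B₁)`; in every case the assignment is
constant on the orbits of the group on letters, so it suffices to check generators
(`grpA_le_wreath` and its companions).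

*Contraction.* `Contr S g` says that `g` reaches the nucleus after finitely many steps of taking
sections along all branches. This property is preserved by right multiplication with each generator:
for `α` and `a` because their sections are trivial, then for `β, γ`, then for `b, c`. By induction
on `Contr` only the case `g ∈ N` matters. There the table above leads, after at most two letters,
from a product `g * s` to a product of an element of one of the six groups with an element of the
same group, or to a case already treated (`Contr.mul_β_γ`, `Contr.mul_b_c`).

*Minimality.* The section at the word `44` of `g ∈ A` is `g` itself, since the section at `4`
exchanges `β ↔ γ` and `b ↔ c`. Elements of `C, C₁, A₁` are sections of elements of `A` at one
letter, those of `B` are sections of elements of `C`, and those of `B₁` of elements of `C₁`. So every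
element of `N` is the section of a single element of `Γ` at arbitrarily long words
(`Recurrent`), and by uniqueness of sections it belongs to every set containing all sufficiently deep sections.
-/

/-- The alphabet `X = {1,2,3,4}`, encoded as `Fin 4` (letter i ↔ `i-1`). -/
abbrev Alph : Type := Fin 4

/-- The set `X*` of finite words over the alphabet. -/
abbrev Word : Type := List Alph

/-- The permutation σ = (12)(34) of the alphabet. -/
def permSigma : Alph → Alph := ![1, 0, 3, 2]

/-- The permutation π = (13)(24) of the alphabet. -/
def permPi : Alph → Alph := ![2, 3, 0, 1]

/-- A system of six bijections α, β, γ, a, b, c of `X*` satisfying the defining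
recursions (each fixes the empty word; the recursions uniquely determine them). -/
structure NekSystem where
  α : Equiv.Perm Word
  β : Equiv.Perm Word
  γ : Equiv.Perm Word
  a : Equiv.Perm Word
  b : Equiv.Perm Word
  c : Equiv.Perm Word
  hαnil : α [] = []
  hβnil : β [] = []
  hγnil : γ [] = []
  hanil : a [] = []
  hbnil : b [] = []
  hcnil : c [] = []
  hα : ∀ (x : Alph) (w : Word), α (x :: w) = permSigma x :: w
  ha : ∀ (x : Alph) (w : Word), a (x :: w) = permPi x :: w
  hβ0 : ∀ w : Word, β (0 :: w) = 0 :: α w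
  hβ1 : ∀ w : Word, β (1 :: w) = 1 :: γ w
  hβ2 : ∀ w : Word, β (2 :: w) = 2 :: α w
  hβ3 : ∀ w : Word, β (3 :: w) = 3 :: γ w
  hγ0 : ∀ w : Word, γ (0 :: w) = 0 :: β w
  hγ1 : ∀ w : Word, γ (1 :: w) = 1 :: w
  hγ2 : ∀ w : Word, γ (2 :: w) = 2 :: w
  hγ3 : ∀ w : Word, γ (3 :: w) = 3 :: β w
  hb0 : ∀ w : Word, b (0 :: w) = 0 :: a (α w)
  hb1 : ∀ w : Word, b (1 :: w) = 1 :: a (α w)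
  hb2 : ∀ w : Word, b (2 :: w) = 2 :: c w
  hb3 : ∀ w : Word, b (3 :: w) = 3 :: c w
  hc0 : ∀ w : Word, c (0 :: w) = 0 :: b (β w)
  hc1 : ∀ w : Word, c (1 :: w) = 1 :: b (β w)
  hc2 : ∀ w : Word, c (2 :: w) = 2 :: b w
  hc3 : ∀ w : Word, c (3 :: w) = 3 :: b w

/-- `h` is the section of `g` at the word `v`: `g (v ++ w) = g v ++ h w` for all `w`.
(Elements of Γ preserve lengths and prefixes, so sections exist and are unique.) -/
def IsSection (g : Equiv.Perm Word) (v : Word) (h : Equiv.Perm Word) : Prop :=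
  ∀ w : Word, g (v ++ w) = g v ++ h w

/-- The group Γ = ⟨α, β, γ, a, b, c⟩. -/
def Gam (S : NekSystem) : Subgroup (Equiv.Perm Word) :=
  Subgroup.closure {S.α, S.β, S.γ, S.a, S.b, S.c}

/-- The nucleus N = Γ_A ∪ Γ_B ∪ Γ_C ∪ Γ_{A₁} ∪ Γ_{B₁} ∪ Γ_{C₁}. -/
def Nuc (S : NekSystem) : Set (Equiv.Perm Word) :=
  ↑(Subgroup.closure {S.β, S.γ, S.b, S.c}) ∪
  ↑(Subgroup.closure {S.α, S.γ, S.a, S.c}) ∪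
  ↑(Subgroup.closure {S.α, S.β, S.a, S.b}) ∪
  ↑(Subgroup.closure {S.α, S.b, S.c}) ∪
  ↑(Subgroup.closure {S.β, S.a, S.c * S.γ}) ∪
  ↑(Subgroup.closure {S.γ, S.a * S.α, S.b * S.β})

/-! ### Relations between the generators -/

namespace NekSystem

variable (S : NekSystem)

lemma letter_cases {P : Alph → Prop} (h0 : P 0) (h1 : P 1) (h2 : P 2) (h3 : P 3) (x : Alph) :
    P x := by
  fin_cases x
  exacts [h0, h1, h2, h3]

lemma permSigma_invol (x : Alph) : permSigma (permSigma x) = x := by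
  revert x; decide

lemma permPi_invol (x : Alph) : permPi (permPi x) = x := by
  revert x; decide

lemma permPi_permSigma (x : Alph) : permPi (permSigma x) = permSigma (permPi x) := by
  revert x; decide

lemma α_apply_α (w : Word) : S.α (S.α w) = w := by
  cases w with
  | nil => simp [S.hαnil]
  | cons x w => simp [S.hα, permSigma_invol]

lemma a_apply_a (w : Word) : S.a (S.a w) = w := by
  cases w with
  | nil => simp [S.hanil]
  | cons x w => simp [S.ha, permPi_invol]

lemma a_apply_α (w : Word) : S.a (S.α w) = S.α (S.a w) := by
  cases w with
  | nil => simp [S.hanil, S.hαnil]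
  | cons x w => simp [S.ha, S.hα, permPi_permSigma]

lemma β_γ_invol (w : Word) : S.β (S.β w) = w ∧ S.γ (S.γ w) = w := by
  induction w with
  | nil => simp [S.hβnil, S.hγnil]
  | cons x w ih =>
    revert x
    refine letter_cases ?_ ?_ ?_ ?_ <;>
    simp [S.hβ0, S.hβ1, S.hβ2, S.hβ3, S.hγ0, S.hγ1, S.hγ2, S.hγ3, S.α_apply_α, ih]

lemma β_apply_β (w : Word) : S.β (S.β w) = w := (S.β_γ_invol w).1

lemma γ_apply_γ (w : Word) : S.γ (S.γ w) = w := (S.β_γ_invol w).2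

lemma c_apply_α (w : Word) : S.c (S.α w) = S.α (S.c w) := by
  cases w with
  | nil => simp [S.hcnil, S.hαnil]
  | cons x w =>
    revert x
    refine letter_cases ?_ ?_ ?_ ?_ <;>
    simp [S.hα, permSigma, S.hc0, S.hc1, S.hc2, S.hc3]

lemma α_apply_a_apply_γ (w : Word) : S.α (S.a (S.γ w)) = S.γ (S.α (S.a w)) := by
  cases w with
  | nil => simp [S.hanil, S.hαnil, S.hγnil]
  | cons x w =>
    revert x
    refine letter_cases ?_ ?_ ?_ ?_ <;>
    simp [S.hα, S.ha, permSigma, permPi, S.hγ0, S.hγ1, S.hγ2, S.hγ3]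

lemma b_β_c_γ_comm (w : Word) : S.b (S.β w) = S.β (S.b w) ∧ S.c (S.γ w) = S.γ (S.c w) := by
  induction w with
  | nil => simp [S.hbnil, S.hβnil, S.hcnil, S.hγnil]
  | cons x w ih =>
    revert x
    refine letter_cases ?_ ?_ ?_ ?_ <;>
    simp [S.hβ0, S.hβ1, S.hβ2, S.hβ3, S.hγ0, S.hγ1, S.hγ2, S.hγ3, S.hb0, S.hb1, S.hb2, S.hb3,
      S.hc0, S.hc1, S.hc2, S.hc3, S.α_apply_α, S.β_apply_β, S.a_apply_α, S.α_apply_a_apply_γ,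
      S.c_apply_α, ih]

lemma b_c_invol (w : Word) : S.b (S.b w) = w ∧ S.c (S.c w) = w := by
  induction w with
  | nil => simp [S.hbnil, S.hcnil]
  | cons x w ih =>
    revert x
    refine letter_cases ?_ ?_ ?_ ?_ <;>
    simp [S.hb0, S.hb1, S.hb2, S.hb3, S.hc0, S.hc1, S.hc2, S.hc3, ih, a_apply_α, a_apply_a,
      α_apply_α, b_β_c_γ_comm, β_apply_β]

lemma α_sq : S.α * S.α = 1 := Equiv.ext S.α_apply_α
lemma a_sq : S.a * S.a = 1 := Equiv.ext S.a_apply_a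
lemma β_sq : S.β * S.β = 1 := Equiv.ext S.β_apply_β
lemma γ_sq : S.γ * S.γ = 1 := Equiv.ext S.γ_apply_γ
lemma b_sq : S.b * S.b = 1 := Equiv.ext fun w => (S.b_c_invol w).1
lemma c_sq : S.c * S.c = 1 := Equiv.ext fun w => (S.b_c_invol w).2

/-! ### Wreath decompositions -/

/-- `g` has wreath decomposition `(p, h)`: it acts on the first letter by `p` and its section at the
letter `x` is `h x`. -/
structure Wr (g : Equiv.Perm Word) (p : Equiv.Perm Alph) (h : Alph → Equiv.Perm Word) : Prop where
  nil : g [] = []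
  cons : ∀ x w, g (x :: w) = p x :: h x w

lemma Wr.one : Wr 1 1 (fun _ => 1) := ⟨rfl, fun _ _ => rfl⟩

lemma Wr.mul {g g' : Equiv.Perm Word} {p p' : Equiv.Perm Alph} {h h' : Alph → Equiv.Perm Word}
    (H : Wr g p h) (H' : Wr g' p' h') : Wr (g * g') (p * p') (fun x => h (p' x) * h' x) :=
  ⟨by simp [H.nil, H'.nil], fun x w => by simp [H.cons, H'.cons]⟩

lemma Wr.inv {g : Equiv.Perm Word} {p : Equiv.Perm Alph} {h : Alph → Equiv.Perm Word}
    (H : Wr g p h) : Wr g⁻¹ p⁻¹ (fun x => (h (p⁻¹ x))⁻¹) :=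
  ⟨by rw [Equiv.Perm.inv_eq_iff_eq, H.nil],
    fun x w => by rw [Equiv.Perm.inv_eq_iff_eq, H.cons]; simp⟩

/-- The components of a wreath decomposition are sections. The hypothesis on `h x` is needed because `IsSection` compares with the value of `g` at the one-letter word. -/
lemma Wr.isSection {g : Equiv.Perm Word} {p : Equiv.Perm Alph} {h : Alph → Equiv.Perm Word}
    (H : Wr g p h) (x : Alph) (hx : h x [] = []) : IsSection g [x] (h x) := fun w => by
  simp [H.cons, hx]

/-- `permSigma` as a permutation of the alphabet. -/
def sigma : Equiv.Perm Alph := ⟨permSigma, permSigma, permSigma_invol, permSigma_invol⟩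

/-- `permPi` as a permutation of the alphabet. -/
def piPerm : Equiv.Perm Alph := ⟨permPi, permPi, permPi_invol, permPi_invol⟩

lemma wr_α : Wr S.α sigma (fun _ => 1) := ⟨S.hαnil, S.hα⟩

lemma wr_a : Wr S.a piPerm (fun _ => 1) := ⟨S.hanil, S.ha⟩

lemma wr_β : Wr S.β 1 ![S.α, S.γ, S.α, S.γ] :=
  ⟨S.hβnil, letter_cases S.hβ0 S.hβ1 S.hβ2 S.hβ3⟩

lemma wr_γ : Wr S.γ 1 ![S.β, 1, 1, S.β] :=
  ⟨S.hγnil, letter_cases S.hγ0 S.hγ1 S.hγ2 S.hγ3⟩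

lemma wr_b : Wr S.b 1 ![S.a * S.α, S.a * S.α, S.c, S.c] :=
  ⟨S.hbnil, letter_cases S.hb0 S.hb1 S.hb2 S.hb3⟩

lemma wr_c : Wr S.c 1 ![S.b * S.β, S.b * S.β, S.b, S.b] :=
  ⟨S.hcnil, letter_cases S.hc0 S.hc1 S.hc2 S.hc3⟩

/-- The bijections in wreath form whose section at each letter `x` lies in `K x` and which permute
the letters within the level sets of `K`; the last condition makes this a subgroup. -/
def wreath (K : Alph → Subgroup (Equiv.Perm Word)) : Subgroup (Equiv.Perm Word) where
  carrier := {g | ∃ p h, Wr g p h ∧ (∀ x, K (p x) = K x) ∧ ∀ x, h x ∈ K x}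
  one_mem' := ⟨1, _, Wr.one, fun _ => rfl, fun _ => one_mem _⟩
  mul_mem' := by
    rintro g g' ⟨p, h, H, hp, hh⟩ ⟨p', h', H', hp', hh'⟩
    refine ⟨_, _, H.mul H', fun x => ?_, fun x => mul_mem ?_ (hh' x)⟩
    · rw [Equiv.Perm.mul_apply, hp, hp']
    · rw [← hp' x]; exact hh _
  inv_mem' := by
    rintro g ⟨p, h, H, hp, hh⟩
    have key : ∀ x, K (p⁻¹ x) = K x := fun x => by rw [← hp (p⁻¹ x)]; simp
    refine ⟨_, _, H.inv, key, fun x => inv_mem ?_⟩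
    rw [← key]; exact hh _

lemma mem_wreath {K : Alph → Subgroup (Equiv.Perm Word)} {g : Equiv.Perm Word}
    {p : Equiv.Perm Alph} {h : Alph → Equiv.Perm Word} (H : Wr g p h)
    (hp : ∀ x, K (p x) = K x) (hh : ∀ x, h x ∈ K x) : g ∈ wreath K := ⟨p, h, H, hp, hh⟩

/-! ### The six subgroups and their sections -/

/-- The subgroup `Γ_A`. -/
def grpA : Subgroup (Equiv.Perm Word) := Subgroup.closure {S.β, S.γ, S.b, S.c}
/-- The subgroup `Γ_B`. -/
def grpB : Subgroup (Equiv.Perm Word) := Subgroup.closure {S.α, S.γ, S.a, S.c}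
/-- The subgroup `Γ_C`. -/
def grpC : Subgroup (Equiv.Perm Word) := Subgroup.closure {S.α, S.β, S.a, S.b}
/-- The subgroup `Γ_{A₁}`. -/
def grpA1 : Subgroup (Equiv.Perm Word) := Subgroup.closure {S.α, S.b, S.c}
/-- The subgroup `Γ_{B₁}`. -/
def grpB1 : Subgroup (Equiv.Perm Word) := Subgroup.closure {S.β, S.a, S.c * S.γ}
/-- The subgroup `Γ_{C₁}`. -/
def grpC1 : Subgroup (Equiv.Perm Word) := Subgroup.closure {S.γ, S.a * S.α, S.b * S.β}

lemma mem_nuc {g : Equiv.Perm Word} : g ∈ Nuc S ↔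
    g ∈ S.grpA ∨ g ∈ S.grpB ∨ g ∈ S.grpC ∨ g ∈ S.grpA1 ∨ g ∈ S.grpB1 ∨ g ∈ S.grpC1 := by
  simp only [Nuc, Set.mem_union, SetLike.mem_coe, or_assoc, grpA, grpB, grpC, grpA1, grpB1, grpC1]

lemma gens_A : S.β ∈ S.grpA ∧ S.γ ∈ S.grpA ∧ S.b ∈ S.grpA ∧ S.c ∈ S.grpA := by
  refine ⟨?_, ?_, ?_, ?_⟩ <;> exact Subgroup.subset_closure (by simp)

lemma gens_B : S.α ∈ S.grpB ∧ S.γ ∈ S.grpB ∧ S.a ∈ S.grpB ∧ S.c ∈ S.grpB := by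
  refine ⟨?_, ?_, ?_, ?_⟩ <;> exact Subgroup.subset_closure (by simp)

lemma gens_C : S.α ∈ S.grpC ∧ S.β ∈ S.grpC ∧ S.a ∈ S.grpC ∧ S.b ∈ S.grpC := by
  refine ⟨?_, ?_, ?_, ?_⟩ <;> exact Subgroup.subset_closure (by simp)

lemma gens_A1 : S.α ∈ S.grpA1 ∧ S.b ∈ S.grpA1 ∧ S.c ∈ S.grpA1 := by
  refine ⟨?_, ?_, ?_⟩ <;> exact Subgroup.subset_closure (by simp)

lemma gens_B1 : S.β ∈ S.grpB1 ∧ S.a ∈ S.grpB1 ∧ S.c * S.γ ∈ S.grpB1 := by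
  refine ⟨?_, ?_, ?_⟩ <;> exact Subgroup.subset_closure (by simp)

lemma gens_C1 : S.γ ∈ S.grpC1 ∧ S.a * S.α ∈ S.grpC1 ∧ S.b * S.β ∈ S.grpC1 := by
  refine ⟨?_, ?_, ?_⟩ <;> exact Subgroup.subset_closure (by simp)

lemma aα_mem_C : S.a * S.α ∈ S.grpC := mul_mem S.gens_C.2.2.1 S.gens_C.1
lemma bβ_mem_C : S.b * S.β ∈ S.grpC := mul_mem S.gens_C.2.2.2 S.gens_C.2.1
lemma bβ_mem_A : S.b * S.β ∈ S.grpA := mul_mem S.gens_A.2.2.1 S.gens_A.1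

lemma grpA_le_wreath : S.grpA ≤ wreath ![S.grpC, S.grpC1, S.grpA1, S.grpA] := by
  rw [grpA, Subgroup.closure_le]
  rintro g (rfl | rfl | rfl | rfl)
  · exact mem_wreath S.wr_β (fun _ => rfl)
      (letter_cases S.gens_C.1 S.gens_C1.1 S.gens_A1.1 S.gens_A.2.1)
  · exact mem_wreath S.wr_γ (fun _ => rfl)
      (letter_cases S.gens_C.2.1 (one_mem S.grpC1) (one_mem S.grpA1) S.gens_A.1)
  · exact mem_wreath S.wr_b (fun _ => rfl)
      (letter_cases S.aα_mem_C S.gens_C1.2.1 S.gens_A1.2.2 S.gens_A.2.2.2)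
  · exact mem_wreath S.wr_c (fun _ => rfl)
      (letter_cases S.bβ_mem_C S.gens_C1.2.2 S.gens_A1.2.1 S.gens_A.2.2.1)

lemma grpB_le_wreath : S.grpB ≤ wreath (fun _ => S.grpA ⊓ S.grpC) := by
  rw [grpB, Subgroup.closure_le]
  have hβ : S.β ∈ S.grpA ⊓ S.grpC := ⟨S.gens_A.1, S.gens_C.2.1⟩
  have hb : S.b ∈ S.grpA ⊓ S.grpC := ⟨S.gens_A.2.2.1, S.gens_C.2.2.2⟩
  rintro g (rfl | rfl | rfl | rfl)
  · exact mem_wreath S.wr_α (fun _ => rfl) (fun _ => one_mem _)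
  · exact mem_wreath S.wr_γ (fun _ => rfl) (letter_cases hβ (one_mem _) (one_mem _) hβ)
  · exact mem_wreath S.wr_a (fun _ => rfl) (fun _ => one_mem _)
  · exact mem_wreath S.wr_c (fun _ => rfl)
      (letter_cases (mul_mem hb hβ) (mul_mem hb hβ) hb hb)

lemma grpC_le_wreath : S.grpC ≤ wreath (fun _ => S.grpB) := by
  rw [grpC, Subgroup.closure_le]
  obtain ⟨hα, hγ, ha, hc⟩ := S.gens_B
  rintro g (rfl | rfl | rfl | rfl)
  · exact mem_wreath S.wr_α (fun _ => rfl) (fun _ => one_mem _)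
  · exact mem_wreath S.wr_β (fun _ => rfl) (letter_cases hα hγ hα hγ)
  · exact mem_wreath S.wr_a (fun _ => rfl) (fun _ => one_mem _)
  · exact mem_wreath S.wr_b (fun _ => rfl)
      (letter_cases (mul_mem ha hα) (mul_mem ha hα) hc hc)

lemma grpA1_le_wreath : S.grpA1 ≤ wreath ![S.grpC1 ⊓ S.grpC, S.grpC1 ⊓ S.grpC,
    S.grpA1 ⊓ S.grpA, S.grpA1 ⊓ S.grpA] := by
  rw [grpA1, Subgroup.closure_le]
  have haα : S.a * S.α ∈ S.grpC1 ⊓ S.grpC := ⟨S.gens_C1.2.1, S.aα_mem_C⟩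
  have hbβ : S.b * S.β ∈ S.grpC1 ⊓ S.grpC := ⟨S.gens_C1.2.2, S.bβ_mem_C⟩
  have hb : S.b ∈ S.grpA1 ⊓ S.grpA := ⟨S.gens_A1.2.1, S.gens_A.2.2.1⟩
  have hc : S.c ∈ S.grpA1 ⊓ S.grpA := ⟨S.gens_A1.2.2, S.gens_A.2.2.2⟩
  rintro g (rfl | rfl | rfl)
  · exact mem_wreath S.wr_α (letter_cases rfl rfl rfl rfl)
      (letter_cases (one_mem _) (one_mem _) (one_mem _) (one_mem _))
  · exact mem_wreath S.wr_b (fun _ => rfl) (letter_cases haα haα hc hc)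
  · exact mem_wreath S.wr_c (fun _ => rfl) (letter_cases hbβ hbβ hb hb)

lemma grpB1_le_wreath : S.grpB1 ≤ wreath ![S.grpA1 ⊓ S.grpC, S.grpC1 ⊓ S.grpA,
    S.grpA1 ⊓ S.grpC, S.grpC1 ⊓ S.grpA] := by
  rw [grpB1, Subgroup.closure_le]
  have hα : S.α ∈ S.grpA1 ⊓ S.grpC := ⟨S.gens_A1.1, S.gens_C.1⟩
  have hb : S.b ∈ S.grpA1 ⊓ S.grpC := ⟨S.gens_A1.2.1, S.gens_C.2.2.2⟩
  have hγ : S.γ ∈ S.grpC1 ⊓ S.grpA := ⟨S.gens_C1.1, S.gens_A.2.1⟩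
  have hbβ : S.b * S.β ∈ S.grpC1 ⊓ S.grpA := ⟨S.gens_C1.2.2, S.bβ_mem_A⟩
  rintro g (rfl | rfl | rfl)
  · exact mem_wreath S.wr_β (fun _ => rfl) (letter_cases hα hγ hα hγ)
  · exact mem_wreath S.wr_a (letter_cases rfl rfl rfl rfl)
      (letter_cases (one_mem _) (one_mem _) (one_mem _) (one_mem _))
  · refine mem_wreath (S.wr_c.mul S.wr_γ) (fun _ => rfl) (letter_cases ?_ ?_ ?_ ?_)
    · change S.b * S.β * S.β ∈ _
      rw [mul_assoc, β_sq, mul_one]; exact hb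
    · change S.b * S.β * 1 ∈ _
      rw [mul_one]; exact hbβ
    · change S.b * 1 ∈ _
      rw [mul_one]; exact hb
    · exact hbβ

lemma grpC1_le_wreath : S.grpC1 ≤ wreath ![S.grpB1, S.grpB, S.grpB, S.grpB1] := by
  rw [grpC1, Subgroup.closure_le]
  obtain ⟨hα, hγ, ha, hc⟩ := S.gens_B
  rintro g (rfl | rfl | rfl)
  · exact mem_wreath S.wr_γ (fun _ => rfl)
      (letter_cases S.gens_B1.1 (one_mem S.grpB) (one_mem S.grpB) S.gens_B1.1)
  · refine mem_wreath (S.wr_a.mul S.wr_α) (letter_cases rfl rfl rfl rfl)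
      fun x => ?_
    simp
  · refine mem_wreath (S.wr_b.mul S.wr_β) (fun _ => rfl) (letter_cases ?_ ?_ ?_ ?_)
    · change S.a * S.α * S.α ∈ _
      rw [mul_assoc, α_sq, mul_one]; exact S.gens_B1.2.1
    · exact mul_mem (mul_mem ha hα) hγ
    · exact mul_mem hc hα
    · exact S.gens_B1.2.2

lemma grpA_le_nuc {g : Equiv.Perm Word} (h : g ∈ S.grpA) : g ∈ Nuc S := S.mem_nuc.2 (by tauto)
lemma grpB_le_nuc {g : Equiv.Perm Word} (h : g ∈ S.grpB) : g ∈ Nuc S := S.mem_nuc.2 (by tauto)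
lemma grpC_le_nuc {g : Equiv.Perm Word} (h : g ∈ S.grpC) : g ∈ Nuc S := S.mem_nuc.2 (by tauto)
lemma grpA1_le_nuc {g : Equiv.Perm Word} (h : g ∈ S.grpA1) : g ∈ Nuc S := S.mem_nuc.2 (by tauto)
lemma grpB1_le_nuc {g : Equiv.Perm Word} (h : g ∈ S.grpB1) : g ∈ Nuc S := S.mem_nuc.2 (by tauto)
lemma grpC1_le_nuc {g : Equiv.Perm Word} (h : g ∈ S.grpC1) : g ∈ Nuc S := S.mem_nuc.2 (by tauto)

/-- The nucleus is state-closed, in terms of wreath decompositions. -/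
lemma nuc_wr {g : Equiv.Perm Word} (hg : g ∈ Nuc S) : ∃ p h, Wr g p h ∧ ∀ x, h x ∈ Nuc S := by
  rcases S.mem_nuc.1 hg with hg | hg | hg | hg | hg | hg
  · obtain ⟨p, h, H, -, hh⟩ := S.grpA_le_wreath hg
    exact ⟨p, h, H, letter_cases (S.grpC_le_nuc (hh 0)) (S.grpC1_le_nuc (hh 1))
      (S.grpA1_le_nuc (hh 2)) (S.grpA_le_nuc (hh 3))⟩
  · obtain ⟨p, h, H, -, hh⟩ := S.grpB_le_wreath hg
    exact ⟨p, h, H, fun x => S.grpA_le_nuc (hh x).1⟩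
  · obtain ⟨p, h, H, -, hh⟩ := S.grpC_le_wreath hg
    exact ⟨p, h, H, fun x => S.grpB_le_nuc (hh x)⟩
  · obtain ⟨p, h, H, -, hh⟩ := S.grpA1_le_wreath hg
    exact ⟨p, h, H, letter_cases (S.grpC_le_nuc (hh 0).2) (S.grpC_le_nuc (hh 1).2)
      (S.grpA_le_nuc (hh 2).2) (S.grpA_le_nuc (hh 3).2)⟩
  · obtain ⟨p, h, H, -, hh⟩ := S.grpB1_le_wreath hg
    exact ⟨p, h, H, letter_cases (S.grpC_le_nuc (hh 0).2) (S.grpA_le_nuc (hh 1).2)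
      (S.grpC_le_nuc (hh 2).2) (S.grpA_le_nuc (hh 3).2)⟩
  · obtain ⟨p, h, H, -, hh⟩ := S.grpC1_le_wreath hg
    exact ⟨p, h, H, letter_cases (S.grpB1_le_nuc (hh 0)) (S.grpB_le_nuc (hh 1))
      (S.grpB_le_nuc (hh 2)) (S.grpB1_le_nuc (hh 3))⟩

lemma nuc_nil {g : Equiv.Perm Word} (hg : g ∈ Nuc S) : g [] = [] := by
  obtain ⟨p, h, H, -⟩ := S.nuc_wr hg
  exact H.nil

lemma isSection_nil {g : Equiv.Perm Word} (hg : g [] = []) : IsSection g [] g := fun w => by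
  simp [hg]

lemma IsSection.trans {g h k : Equiv.Perm Word} {u v : Word} (h₁ : IsSection g u h)
    (h₂ : IsSection h v k) : IsSection g (u ++ v) k := fun w => by
  rw [List.append_assoc, h₁, h₂, h₁ v, List.append_assoc]

lemma nuc_section {g : Equiv.Perm Word} (hg : g ∈ Nuc S) (v : Word) :
    ∃ h ∈ Nuc S, IsSection g v h := by
  induction v generalizing g with
  | nil => exact ⟨g, hg, isSection_nil (S.nuc_nil hg)⟩
  | cons x v ih =>
    obtain ⟨p, h, H, hh⟩ := S.nuc_wr hg
    obtain ⟨k, hk, hs⟩ := ih (hh x)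
    exact ⟨k, hk, IsSection.trans (H.isSection x (S.nuc_nil (hh x))) hs⟩

/-! ### Contraction -/

/-- `Contr S g`: iterating the passage from an element to its sections at letters, every branch
starting at `g` enters the nucleus. As the alphabet is finite, the depth is then bounded
(`Contr.exists_level`). -/
inductive Contr : Equiv.Perm Word → Prop
  | base {g : Equiv.Perm Word} (hg : g ∈ Nuc S) : Contr g
  | step {g : Equiv.Perm Word} {p : Equiv.Perm Alph} {h : Alph → Equiv.Perm Word}
      (H : Wr g p h) (hh : ∀ x, Contr (h x)) : Contr g

variable {S}

lemma Contr.nil {g : Equiv.Perm Word} (hg : Contr S g) : g [] = [] := by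
  cases hg with
  | base hg => exact S.nuc_nil hg
  | step H _ => exact H.nil

lemma Contr.exists_level {g : Equiv.Perm Word} (hg : Contr S g) :
    ∃ n : ℕ, ∀ v : Word, n ≤ v.length → ∃ h ∈ Nuc S, IsSection g v h := by
  induction hg with
  | base hg => exact ⟨0, fun v _ => S.nuc_section hg v⟩
  | @step g p h H hh ih =>
    choose n hn using ih
    refine ⟨Finset.univ.sup n + 1, fun v hv => ?_⟩
    cases v with
    | nil => simp at hv
    | cons x v =>
      have hx : n x ≤ v.length :=
        (Finset.le_sup (Finset.mem_univ x)).trans (by simpa using hv)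
      obtain ⟨k, hk, hs⟩ := hn x v hx
      exact ⟨k, hk, IsSection.trans (H.isSection x (hh x).nil) hs⟩

/-- Right multiplication by an element with trivial sections, in particular by `α` and `a`. -/
lemma Contr.mul_of_trivial {g t : Equiv.Perm Word} {q : Equiv.Perm Alph} (hg : Contr S g)
    (ht : Wr t q (fun _ => 1)) : Contr S (g * t) := by
  cases hg with
  | base hg =>
    obtain ⟨p, h, H, hh⟩ := S.nuc_wr hg
    exact .step (H.mul ht) fun x => by rw [mul_one]; exact .base (hh _)
  | step H hh => exact .step (H.mul ht) fun x => by rw [mul_one]; exact hh _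

lemma Contr.mul_α {g : Equiv.Perm Word} (hg : Contr S g) : Contr S (g * S.α) :=
  hg.mul_of_trivial S.wr_α

lemma Contr.mul_a {g : Equiv.Perm Word} (hg : Contr S g) : Contr S (g * S.a) :=
  hg.mul_of_trivial S.wr_a

lemma Contr.mul_aα {g : Equiv.Perm Word} (hg : Contr S g) : Contr S (g * (S.a * S.α)) := by
  rw [← mul_assoc]; exact hg.mul_a.mul_α

/-- If `g` has its sections in `K` and `t` fixes the letters, then `g * t` is controlled by the
products of the elements of `K x` with the section of `t` at `x`. -/
lemma contr_mul_of_wreath {K : Alph → Subgroup (Equiv.Perm Word)} {g t : Equiv.Perm Word}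
    {k : Alph → Equiv.Perm Word} (hg : g ∈ wreath K) (ht : Wr t 1 k)
    (hK : ∀ x, ∀ u ∈ K x, Contr S (u * k x)) : Contr S (g * t) := by
  obtain ⟨p, h, H, -, hh⟩ := hg
  exact .step (H.mul ht) fun x => hK x _ (hh x)

lemma contr_A {u t : Equiv.Perm Word} (hu : u ∈ S.grpA) (ht : t ∈ S.grpA) : Contr S (u * t) :=
  .base (S.grpA_le_nuc (mul_mem hu ht))
lemma contr_B {u t : Equiv.Perm Word} (hu : u ∈ S.grpB) (ht : t ∈ S.grpB) : Contr S (u * t) :=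
  .base (S.grpB_le_nuc (mul_mem hu ht))
lemma contr_C {u t : Equiv.Perm Word} (hu : u ∈ S.grpC) (ht : t ∈ S.grpC) : Contr S (u * t) :=
  .base (S.grpC_le_nuc (mul_mem hu ht))
lemma contr_A1 {u t : Equiv.Perm Word} (hu : u ∈ S.grpA1) (ht : t ∈ S.grpA1) : Contr S (u * t) :=
  .base (S.grpA1_le_nuc (mul_mem hu ht))
lemma contr_B1 {u t : Equiv.Perm Word} (hu : u ∈ S.grpB1) (ht : t ∈ S.grpB1) : Contr S (u * t) :=
  .base (S.grpB1_le_nuc (mul_mem hu ht))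
lemma contr_C1 {u t : Equiv.Perm Word} (hu : u ∈ S.grpC1) (ht : t ∈ S.grpC1) : Contr S (u * t) :=
  .base (S.grpC1_le_nuc (mul_mem hu ht))

lemma contr_mul_one {u : Equiv.Perm Word} (hu : u ∈ Nuc S) : Contr S (u * 1) := by
  rw [mul_one]; exact .base hu

lemma contr_mul_α {u : Equiv.Perm Word} (hu : u ∈ Nuc S) : Contr S (u * S.α) :=
  (Contr.base hu).mul_α

lemma contr_B1_γ {g : Equiv.Perm Word} (hg : g ∈ S.grpB1) : Contr S (g * S.γ) :=
  contr_mul_of_wreath (S.grpB1_le_wreath hg) S.wr_γ (letter_cases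
    (fun _ hu => contr_C hu.2 S.gens_C.2.1)
    (fun _ hu => contr_mul_one (S.grpA_le_nuc hu.2))
    (fun _ hu => contr_mul_one (S.grpC_le_nuc hu.2))
    (fun _ hu => contr_A hu.2 S.gens_A.1))

lemma contr_nuc_β {g : Equiv.Perm Word} (hg : g ∈ Nuc S) : Contr S (g * S.β) := by
  rcases S.mem_nuc.1 hg with hg | hg | hg | hg | hg | hg
  · exact contr_A hg S.gens_A.1
  · exact contr_mul_of_wreath (S.grpB_le_wreath hg) S.wr_β (letter_cases
      (fun _ hu => contr_C hu.2 S.gens_C.1) (fun _ hu => contr_A hu.1 S.gens_A.2.1)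
      (fun _ hu => contr_C hu.2 S.gens_C.1) (fun _ hu => contr_A hu.1 S.gens_A.2.1))
  · exact contr_C hg S.gens_C.2.1
  · exact contr_mul_of_wreath (S.grpA1_le_wreath hg) S.wr_β (letter_cases
      (fun _ hu => contr_C hu.2 S.gens_C.1) (fun _ hu => contr_C1 hu.1 S.gens_C1.1)
      (fun _ hu => contr_A1 hu.1 S.gens_A1.1) (fun _ hu => contr_A hu.2 S.gens_A.2.1))
  · exact contr_B1 hg S.gens_B1.1
  · exact contr_mul_of_wreath (S.grpC1_le_wreath hg) S.wr_β (letter_cases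
      (fun _ hu => contr_mul_α (S.grpB1_le_nuc hu)) (fun _ hu => contr_B hu S.gens_B.2.1)
      (fun _ hu => contr_B hu S.gens_B.1) (fun _ hu => contr_B1_γ hu))

lemma contr_nuc_γ {g : Equiv.Perm Word} (hg : g ∈ Nuc S) : Contr S (g * S.γ) := by
  rcases S.mem_nuc.1 hg with hg | hg | hg | hg | hg | hg
  · exact contr_A hg S.gens_A.2.1
  · exact contr_B hg S.gens_B.2.1
  · exact contr_mul_of_wreath (S.grpC_le_wreath hg) S.wr_γ (letter_cases
      (fun _ hu => contr_nuc_β (S.grpB_le_nuc hu))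
      (fun _ hu => contr_mul_one (S.grpB_le_nuc hu))
      (fun _ hu => contr_mul_one (S.grpB_le_nuc hu))
      (fun _ hu => contr_nuc_β (S.grpB_le_nuc hu)))
  · exact contr_mul_of_wreath (S.grpA1_le_wreath hg) S.wr_γ (letter_cases
      (fun _ hu => contr_C hu.2 S.gens_C.2.1)
      (fun _ hu => contr_mul_one (S.grpC_le_nuc hu.2))
      (fun _ hu => contr_mul_one (S.grpA_le_nuc hu.2))
      (fun _ hu => contr_A hu.2 S.gens_A.1))
  · exact contr_B1_γ hg
  · exact contr_C1 hg S.gens_C1.1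

lemma Contr.mul_β_γ {g : Equiv.Perm Word} (hg : Contr S g) :
    Contr S (g * S.β) ∧ Contr S (g * S.γ) := by
  induction hg with
  | base hg => exact ⟨contr_nuc_β hg, contr_nuc_γ hg⟩
  | @step g p h H hh ih =>
    have one : ∀ x, Contr S (h x * 1) := fun x => by rw [mul_one]; exact hh x
    exact ⟨.step (H.mul S.wr_β)
        (letter_cases (hh 0).mul_α (ih 1).2 (hh 2).mul_α (ih 3).2),
      .step (H.mul S.wr_γ) (letter_cases (ih 0).1 (one 1) (one 2) (ih 3).1)⟩

lemma Contr.mul_bβ {g : Equiv.Perm Word} (hg : Contr S (g * S.b)) :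
    Contr S (g * (S.b * S.β)) := by
  rw [← mul_assoc]; exact hg.mul_β_γ.1

lemma contr_B1_c {g : Equiv.Perm Word} (hg : g ∈ S.grpB1) : Contr S (g * S.c) :=
  contr_mul_of_wreath (S.grpB1_le_wreath hg) S.wr_c (letter_cases
    (fun _ hu => contr_C hu.2 S.bβ_mem_C) (fun _ hu => contr_A hu.2 S.bβ_mem_A)
    (fun _ hu => contr_C hu.2 S.gens_C.2.2.2) (fun _ hu => contr_A hu.2 S.gens_A.2.2.1))

lemma contr_nuc_b {g : Equiv.Perm Word} (hg : g ∈ Nuc S) : Contr S (g * S.b) := by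
  rcases S.mem_nuc.1 hg with hg | hg | hg | hg | hg | hg
  · exact contr_A hg S.gens_A.2.2.1
  · exact contr_mul_of_wreath (S.grpB_le_wreath hg) S.wr_b (letter_cases
      (fun _ hu => contr_C hu.2 S.aα_mem_C) (fun _ hu => contr_C hu.2 S.aα_mem_C)
      (fun _ hu => contr_A hu.1 S.gens_A.2.2.2) (fun _ hu => contr_A hu.1 S.gens_A.2.2.2))
  · exact contr_C hg S.gens_C.2.2.2
  · exact contr_A1 hg S.gens_A1.2.1
  · exact contr_mul_of_wreath (S.grpB1_le_wreath hg) S.wr_b (letter_cases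
      (fun _ hu => contr_C hu.2 S.aα_mem_C) (fun _ hu => contr_C1 hu.1 S.gens_C1.2.1)
      (fun _ hu => contr_A1 hu.1 S.gens_A1.2.2) (fun _ hu => contr_A hu.2 S.gens_A.2.2.2))
  · exact contr_mul_of_wreath (S.grpC1_le_wreath hg) S.wr_b (letter_cases
      (fun _ hu => (Contr.base (S.grpB1_le_nuc hu)).mul_aα)
      (fun _ hu => (Contr.base (S.grpB_le_nuc hu)).mul_aα)
      (fun _ hu => contr_B hu S.gens_B.2.2.2) (fun _ hu => contr_B1_c hu))

lemma contr_nuc_c {g : Equiv.Perm Word} (hg : g ∈ Nuc S) : Contr S (g * S.c) := by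
  rcases S.mem_nuc.1 hg with hg | hg | hg | hg | hg | hg
  · exact contr_A hg S.gens_A.2.2.2
  · exact contr_B hg S.gens_B.2.2.2
  · exact contr_mul_of_wreath (S.grpC_le_wreath hg) S.wr_c (letter_cases
      (fun _ hu => (contr_nuc_b (S.grpB_le_nuc hu)).mul_bβ)
      (fun _ hu => (contr_nuc_b (S.grpB_le_nuc hu)).mul_bβ)
      (fun _ hu => contr_nuc_b (S.grpB_le_nuc hu))
      (fun _ hu => contr_nuc_b (S.grpB_le_nuc hu)))
  · exact contr_A1 hg S.gens_A1.2.2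
  · exact contr_B1_c hg
  · exact contr_mul_of_wreath (S.grpC1_le_wreath hg) S.wr_c (letter_cases
      (fun _ hu => (contr_nuc_b (S.grpB1_le_nuc hu)).mul_bβ)
      (fun _ hu => (contr_nuc_b (S.grpB_le_nuc hu)).mul_bβ)
      (fun _ hu => contr_nuc_b (S.grpB_le_nuc hu))
      (fun _ hu => contr_nuc_b (S.grpB1_le_nuc hu)))

lemma Contr.mul_b_c {g : Equiv.Perm Word} (hg : Contr S g) :
    Contr S (g * S.b) ∧ Contr S (g * S.c) := by
  induction hg with
  | base hg => exact ⟨contr_nuc_b hg, contr_nuc_c hg⟩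
  | @step g p h H hh ih =>
    exact ⟨.step (H.mul S.wr_b)
        (letter_cases (hh 0).mul_aα (hh 1).mul_aα (ih 2).2 (ih 3).2),
      .step (H.mul S.wr_c)
        (letter_cases (ih 0).1.mul_bβ (ih 1).1.mul_bβ (ih 2).1 (ih 3).1)⟩

lemma contr_of_mem_Gam {g : Equiv.Perm Word} (hg : g ∈ Gam S) : Contr S g := by
  have key : ∀ g : Equiv.Perm Word, Contr S g →
      ∀ s ∈ ({S.α, S.β, S.γ, S.a, S.b, S.c} : Set (Equiv.Perm Word)), Contr S (g * s) := by
    rintro g hg s (rfl | rfl | rfl | rfl | rfl | rfl)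
    exacts [hg.mul_α, hg.mul_β_γ.1, hg.mul_β_γ.2, hg.mul_a, hg.mul_b_c.1, hg.mul_b_c.2]
  have invol : ∀ s ∈ ({S.α, S.β, S.γ, S.a, S.b, S.c} : Set (Equiv.Perm Word)), s⁻¹ = s := by
    rintro s (rfl | rfl | rfl | rfl | rfl | rfl)
    exacts [inv_eq_of_mul_eq_one_left S.α_sq, inv_eq_of_mul_eq_one_left S.β_sq,
      inv_eq_of_mul_eq_one_left S.γ_sq, inv_eq_of_mul_eq_one_left S.a_sq,
      inv_eq_of_mul_eq_one_left S.b_sq, inv_eq_of_mul_eq_one_left S.c_sq]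
  refine Subgroup.closure_induction_right (p := fun g _ => Contr S g)
    (.base (S.grpA_le_nuc (one_mem _))) (fun g _ s hs hgs => key g hgs s hs)
    (fun g _ s hs hgs => ?_) hg
  rw [invol s hs]
  exact key g hgs s hs

/-! ### Minimality -/

/-- The bijections `g` such that some `f ∈ H` fixes the word `v` and has section `g` at `v`. -/
def sectionsAt (H : Subgroup (Equiv.Perm Word)) (v : Word) : Subgroup (Equiv.Perm Word) where
  carrier := {g | ∃ f ∈ H, f v = v ∧ ∀ w, f (v ++ w) = v ++ g w}
  one_mem' := ⟨1, one_mem _, rfl, fun _ => rfl⟩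
  mul_mem' := by
    rintro g g' ⟨f, hf, hv, H⟩ ⟨f', hf', hv', H'⟩
    exact ⟨f * f', mul_mem hf hf', by simp [hv, hv'], fun w => by simp [H, H']⟩
  inv_mem' := by
    rintro g ⟨f, hf, hv, H⟩
    exact ⟨f⁻¹, inv_mem hf, by rw [Equiv.Perm.inv_eq_iff_eq, hv],
      fun w => by rw [Equiv.Perm.inv_eq_iff_eq, H]; simp⟩

lemma exists_section_of_mem {H : Subgroup (Equiv.Perm Word)} {v : Word} {g : Equiv.Perm Word}
    (hg : g ∈ sectionsAt H v) : ∃ f ∈ H, IsSection f v g := by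
  obtain ⟨f, hf, hv, hs⟩ := hg
  exact ⟨f, hf, fun w => by rw [hs, hv]⟩

/-- The bijections that fix the word `v` and are their own section at `v`. -/
def selfSection (v : Word) : Subgroup (Equiv.Perm Word) where
  carrier := {g | g v = v ∧ ∀ w, g (v ++ w) = v ++ g w}
  one_mem' := ⟨rfl, fun _ => rfl⟩
  mul_mem' := by
    rintro g g' ⟨hv, H⟩ ⟨hv', H'⟩
    exact ⟨by simp [hv, hv'], fun w => by simp [H, H']⟩
  inv_mem' := by
    rintro g ⟨hv, H⟩
    exact ⟨by rw [Equiv.Perm.inv_eq_iff_eq, hv],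
      fun w => by rw [Equiv.Perm.inv_eq_iff_eq, H]; simp⟩

lemma grpA_le_selfSection : S.grpA ≤ selfSection [3, 3] := by
  rw [grpA, Subgroup.closure_le]
  rintro g (rfl | rfl | rfl | rfl) <;> refine ⟨?_, fun w => ?_⟩ <;>
    simp [S.hβ3, S.hγ3, S.hb3, S.hc3, S.hβnil, S.hγnil, S.hbnil, S.hcnil]

lemma grpC_le_sectionsAt : S.grpC ≤ sectionsAt S.grpA [0] := by
  obtain ⟨hβ, hγ, hb, hc⟩ := S.gens_A
  rw [grpC, Subgroup.closure_le]
  rintro g (rfl | rfl | rfl | rfl)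
  · exact ⟨_, hβ, by simp [S.hβ0, S.hαnil], by simp [S.hβ0]⟩
  · exact ⟨_, hγ, by simp [S.hγ0, S.hβnil], by simp [S.hγ0]⟩
  · exact ⟨_, mul_mem hb hβ, by simp [S.hβ0, S.hb0, S.hαnil, S.hanil],
      by simp [S.hβ0, S.hb0, S.α_apply_α]⟩
  · exact ⟨_, mul_mem hc hγ, by simp [S.hγ0, S.hc0, S.hβnil, S.hbnil],
      by simp [S.hγ0, S.hc0, S.β_apply_β]⟩

lemma grpC1_le_sectionsAt : S.grpC1 ≤ sectionsAt S.grpA [1] := by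
  obtain ⟨hβ, hγ, hb, hc⟩ := S.gens_A
  rw [grpC1, Subgroup.closure_le]
  rintro g (rfl | rfl | rfl)
  · exact ⟨_, hβ, by simp [S.hβ1, S.hγnil], by simp [S.hβ1]⟩
  · exact ⟨_, hb, by simp [S.hb1, S.hanil, S.hαnil], by simp [S.hb1]⟩
  · exact ⟨_, hc, by simp [S.hc1, S.hbnil, S.hβnil], by simp [S.hc1]⟩

lemma grpA1_le_sectionsAt : S.grpA1 ≤ sectionsAt S.grpA [2] := by
  obtain ⟨hβ, hγ, hb, hc⟩ := S.gens_A
  rw [grpA1, Subgroup.closure_le]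
  rintro g (rfl | rfl | rfl)
  · exact ⟨_, hβ, by simp [S.hβ2, S.hαnil], by simp [S.hβ2]⟩
  · exact ⟨_, hc, by simp [S.hc2, S.hbnil], by simp [S.hc2]⟩
  · exact ⟨_, hb, by simp [S.hb2, S.hcnil], by simp [S.hb2]⟩

/-- The generators `α, γ, a, c` of `Γ_B` are the sections at the first letter of
`β`, `αβα`, `bβ`, `aba`. -/
lemma grpB_le_sectionsAt : S.grpB ≤ sectionsAt S.grpC [0] := by
  obtain ⟨hα, hβ, ha, hb⟩ := S.gens_C
  rw [grpB, Subgroup.closure_le]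
  rintro g (rfl | rfl | rfl | rfl)
  · exact ⟨_, hβ, by simp [S.hβ0, S.hαnil], by simp [S.hβ0]⟩
  · exact ⟨_, mul_mem (mul_mem hα hβ) hα, by simp [S.hα, permSigma, S.hβ1, S.hγnil],
      by simp [S.hα, permSigma, S.hβ1]⟩
  · exact ⟨_, mul_mem hb hβ, by simp [S.hβ0, S.hb0, S.hαnil, S.hanil],
      by simp [S.hβ0, S.hb0, S.α_apply_α]⟩
  · exact ⟨_, mul_mem (mul_mem ha hb) ha, by simp [S.ha, permPi, S.hb2, S.hcnil],
      by simp [S.ha, permPi, S.hb2]⟩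

/-- The generators `β, a, cγ` of `Γ_{B₁}` are the sections at the first letter of `γ`, `bβ` and
the conjugate of `bβ` by `aα`. -/
lemma grpB1_le_sectionsAt : S.grpB1 ≤ sectionsAt S.grpC1 [0] := by
  obtain ⟨hγ, haα, hbβ⟩ := S.gens_C1
  rw [grpB1, Subgroup.closure_le]
  rintro g (rfl | rfl | rfl)
  · exact ⟨_, hγ, by simp [S.hγ0, S.hβnil], by simp [S.hγ0]⟩
  · exact ⟨_, hbβ, by simp [S.hβ0, S.hb0, S.hαnil, S.hanil],
      by simp [S.hβ0, S.hb0, S.α_apply_α]⟩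
  · exact ⟨_, mul_mem (mul_mem haα hbβ) haα,
      by simp [S.hα, S.ha, permSigma, permPi, S.hβ3, S.hb3, S.hγnil, S.hcnil],
      by simp [S.hα, S.ha, permSigma, permPi, S.hβ3, S.hb3]⟩

variable (S) in
/-- `g` is the section of one fixed element of `Γ` at arbitrarily long words. -/
def Recurrent (g : Equiv.Perm Word) : Prop :=
  ∃ f ∈ Gam S, ∀ n : ℕ, ∃ v : Word, n ≤ v.length ∧ IsSection f v g

lemma Recurrent.of_isSection {f g : Equiv.Perm Word} {u : Word} (hf : Recurrent S f)
    (hs : IsSection f u g) : Recurrent S g := by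
  obtain ⟨e, he, H⟩ := hf
  refine ⟨e, he, fun n => ?_⟩
  obtain ⟨v, hv, hs'⟩ := H n
  exact ⟨v ++ u, by simp; omega, IsSection.trans hs' hs⟩

lemma recurrent_of_sectionsAt {H : Subgroup (Equiv.Perm Word)} {u : Word}
    (hH : ∀ f ∈ H, Recurrent S f) {g : Equiv.Perm Word} (hg : g ∈ sectionsAt H u) :
    Recurrent S g := by
  obtain ⟨f, hf, hs⟩ := exists_section_of_mem hg
  exact (hH f hf).of_isSection hs

lemma grpA_le_Gam : S.grpA ≤ Gam S := by
  refine Subgroup.closure_mono ?_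
  rintro g (rfl | rfl | rfl | rfl) <;> simp

lemma recurrent_A {g : Equiv.Perm Word} (hg : g ∈ S.grpA) : Recurrent S g := by
  refine ⟨g, grpA_le_Gam hg, fun n => ?_⟩
  obtain ⟨h33, hs⟩ := grpA_le_selfSection hg
  have hsec : IsSection g [3, 3] g := fun w => by rw [hs, h33]
  induction n with
  | zero => exact ⟨[], le_rfl, isSection_nil (S.nuc_nil (S.grpA_le_nuc hg))⟩
  | succ n ih =>
    obtain ⟨v, hv, hv'⟩ := ih
    exact ⟨v ++ [3, 3], by simp; omega, IsSection.trans hv' hsec⟩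

lemma recurrent_of_mem_nuc {g : Equiv.Perm Word} (hg : g ∈ Nuc S) : Recurrent S g := by
  have hC : ∀ f ∈ S.grpC, Recurrent S f := fun f hf =>
    recurrent_of_sectionsAt (fun _ => recurrent_A) (grpC_le_sectionsAt hf)
  have hC1 : ∀ f ∈ S.grpC1, Recurrent S f := fun f hf =>
    recurrent_of_sectionsAt (fun _ => recurrent_A) (grpC1_le_sectionsAt hf)
  rcases S.mem_nuc.1 hg with hg | hg | hg | hg | hg | hg
  · exact recurrent_A hg
  · exact recurrent_of_sectionsAt hC (grpB_le_sectionsAt hg)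
  · exact hC g hg
  · exact recurrent_of_sectionsAt (fun _ => recurrent_A) (grpA1_le_sectionsAt hg)
  · exact recurrent_of_sectionsAt hC1 (grpB1_le_sectionsAt hg)
  · exact hC1 g hg

lemma IsSection.unique {g h h' : Equiv.Perm Word} {v : Word} (H : IsSection g v h)
    (H' : IsSection g v h') : h = h' :=
  Equiv.ext fun w => List.append_cancel_left ((H w).symm.trans (H' w))

end NekSystem

/-- Γ is contracting with nucleus N: (i) N is state-closed; (ii) for every g ∈ Γ
all sections at sufficiently long words lie in N; (iii) N is the smallest subset
of Γ with property (ii). -/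
theorem statement5 (S : NekSystem) :
    (∀ g ∈ Nuc S, ∀ x : Alph, ∃ h ∈ Nuc S, IsSection g [x] h) ∧
    (∀ g ∈ Gam S, ∃ n₀ : ℕ, ∀ v : Word, n₀ ≤ v.length → ∃ h ∈ Nuc S, IsSection g v h) ∧
    (∀ N' : Set (Equiv.Perm Word), N' ⊆ ↑(Gam S) →
      (∀ g ∈ Gam S, ∃ n₀ : ℕ, ∀ v : Word, n₀ ≤ v.length → ∃ h ∈ N', IsSection g v h) →
      Nuc S ⊆ N') := by
  refine ⟨fun g hg x => S.nuc_section hg [x],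
    fun g hg => (NekSystem.contr_of_mem_Gam hg).exists_level, fun N' _ hN' g hg => ?_⟩
  obtain ⟨f, hf, H⟩ := NekSystem.recurrent_of_mem_nuc hg
  obtain ⟨n₀, hn⟩ := hN' f hf
  obtain ⟨v, hv, hs⟩ := H n₀
  obtain ⟨h, hh, hs'⟩ := hn v hv
  rw [NekSystem.IsSection.unique hs hs']
  exact hh
end

section
/- The set N = Γ_A ∪ Γ_B ∪ Γ_C ∪ Γ_{A₁} ∪ Γ_{B₁} ∪ Γ_{C₁} has exactly 288 elements. -/
/-- Names of the generators: `A, B, C` stand for `α, β, γ`. -/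
inductive Gen
  | A | B | C | a | b | c
  deriving DecidableEq

namespace Gen

/-- The permutation of the first letter induced by a generator. -/
def perm : Gen → Alph → Alph
  | A, x => permSigma x
  | a, x => permPi x
  | _, x => x

/-- The section of a generator at a letter, as a word in the generators. -/
def sec : Gen → Alph → List Gen
  | A, _ => []
  | a, _ => []
  | B, x => ![[A], [C], [A], [C]] x
  | C, x => ![[B], [], [], [B]] x
  | b, x => ![[a, A], [a, A], [c], [c]] x
  | c, x => ![[b, B], [b, B], [b], [b]] x

/-- The relations, oriented as rewriting rules: `(l, r) ∈ rules x` stands for `x :: l → r`. -/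
def rules : Gen → List (List Gen × List Gen)
  | A => [([A], [])]
  | B => [([B], []), ([A, B, A, B, A, B, A], [A, B, A, B, A, B, A, B])]
  | C => [([C], []), ([A, C, A], [A, C, A, C]),
      ([B, C, B, C, B, C, B], [B, C, B, C, B, C, B, C])]
  | a => [([a], []), ([A], [A, a]), ([B], [B, a]), ([C], [A, C, A, a])]
  | b => [([b], []), ([A], [A, b]), ([B], [B, b]), ([C], [B, C, B, b]),
      ([a, b, a], [A, B, A, B, A, B, A, B, a, b, a, b])]
  | c => [([c], []), ([A], [A, c]), ([B], [C, B, C, c]), ([C], [C, c]),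
      ([a], [A, C, A, C, a, c]), ([b, c, b], [b, c, b, c])]

/-- Position of a generator in the alphabet, used to compare generators quickly. -/
def idx : Gen → ℕ
  | A => 1 | B => 2 | C => 3 | a => 4 | b => 5 | c => 6

theorem idx_injective : Function.Injective idx := by
  intro x y h
  cases x <;> cases y <;> first | rfl | (simp [idx] at h)

theorem idx_bounds (x : Gen) : 0 < x.idx ∧ x.idx < 8 := by
  cases x <;> simp [idx]

end Gen

/-! ### Words in the generators and rewriting -/

/-- The permutation of the first letter induced by a word in the generators. -/
def permW : List Gen → Alph → Alph
  | [], x => x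
  | g :: u, x => g.perm (permW u x)

/-- The section of a word in the generators at a letter. -/
def secW : List Gen → Alph → List Gen
  | [], _ => []
  | g :: u, x => g.sec (permW u x) ++ secW u x

/-- The action of a word in the generators on `X*`, in computable form. -/
def act : List Gen → Word → Word
  | _, [] => []
  | u, x :: w => permW u x :: act (secW u x) w

/-- `strip p u = some v` when `u = p ++ v`. -/
def strip : List Gen → List Gen → Option (List Gen)
  | [], u => some u
  | _ :: _, [] => none
  | x :: p, y :: u => bif Nat.beq x.idx y.idx then strip p u else none

/-- Looks for the first rule `(l, r)` in the list with `u = l ++ v`, and returns `(r, v)`. -/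
def findRule : List (List Gen × List Gen) → List Gen → Option (List Gen × List Gen)
  | [], _ => none
  | r :: rs, u =>
    match strip r.1 u with
    | some v => some (r.2, v)
    | none => findRule rs u

/-- Left multiplication of a reduced word by a letter, followed by rewriting; the first argument
bounds the recursion depth. -/
def push : ℕ → Gen → List Gen → List Gen
  | 0, x, u => x :: u
  | n + 1, x, u =>
    match findRule x.rules u with
    | none => x :: u
    | some (r, v) => r.foldr (push n) v

/-- Rewritten form of the product of a word with a reduced word. The recursion depth 40 is large
enough for the words considered below; soundness does not depend on it. -/
def mulRed (g u : List Gen) : List Gen := g.foldr (push 40) u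

/-- Normal form of a word under the rewriting rules. -/
def red (u : List Gen) : List Gen := mulRed u []

theorem strip_eq {p u v : List Gen} (h : strip p u = some v) : u = p ++ v := by
  induction p generalizing u with
  | nil => simpa [strip] using h
  | cons x p ih =>
    cases u with
    | nil => simp [strip] at h
    | cons y u =>
      rw [strip] at h
      cases hxy : Nat.beq x.idx y.idx with
      | false => simp [hxy] at h
      | true =>
        rw [hxy, cond_true] at h
        rw [Gen.idx_injective (Nat.eq_of_beq_eq_true hxy), ih h, List.cons_append]

theorem findRule_eq {rs : List (List Gen × List Gen)} {u r v : List Gen}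
    (h : findRule rs u = some (r, v)) : ∃ l, (l, r) ∈ rs ∧ u = l ++ v := by
  induction rs with
  | nil => simp [findRule] at h
  | cons q rs ih =>
    rw [findRule] at h
    cases hs : strip q.1 u with
    | none =>
      rw [hs] at h
      obtain ⟨l, hl, hu⟩ := ih h
      exact ⟨l, List.mem_cons_of_mem _ hl, hu⟩
    | some t =>
      rw [hs] at h
      simp only [Option.some.injEq, Prod.mk.injEq] at h
      obtain ⟨rfl, rfl⟩ := h
      exact ⟨q.1, List.mem_cons_self, strip_eq hs⟩

/-- Both sides of each rule permute the first letter in the same way, and their sections have the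
same normal form. -/
theorem rules_check (g : Gen) : (g.rules.all fun r => (List.finRange 4).all fun x =>
    permW (g :: r.1) x == permW r.2 x && red (secW (g :: r.1) x) == red (secW r.2 x)) = true := by
  cases g <;> decide +kernel

/-! ### The relations hold in every system -/

namespace NekSystem

variable (S : NekSystem)

/-- The bijection named by a letter. -/
def gen : Gen → Equiv.Perm Word
  | .A => S.α
  | .B => S.β
  | .C => S.γ
  | .a => S.a
  | .b => S.b
  | .c => S.c

/-- The bijection represented by a word in the generators. -/
def ev (u : List Gen) : Equiv.Perm Word := (u.map S.gen).prod

@[simp] theorem ev_nil : S.ev [] = 1 := rfl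

@[simp] theorem ev_cons (g : Gen) (u : List Gen) : S.ev (g :: u) = S.gen g * S.ev u := by
  simp [ev]

@[simp] theorem ev_append (u v : List Gen) : S.ev (u ++ v) = S.ev u * S.ev v := by
  simp [ev]

theorem gen_apply_nil (g : Gen) : S.gen g [] = [] := by
  cases g
  exacts [S.hαnil, S.hβnil, S.hγnil, S.hanil, S.hbnil, S.hcnil]

theorem gen_apply_cons (g : Gen) (x : Alph) (w : Word) :
    S.gen g (x :: w) = g.perm x :: S.ev (g.sec x) w := by
  cases g
  · exact S.hα x w
  · fin_cases x
    exacts [S.hβ0 w, S.hβ1 w, S.hβ2 w, S.hβ3 w]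
  · fin_cases x
    exacts [S.hγ0 w, S.hγ1 w, S.hγ2 w, S.hγ3 w]
  · exact S.ha x w
  · fin_cases x
    exacts [S.hb0 w, S.hb1 w, S.hb2 w, S.hb3 w]
  · fin_cases x
    exacts [S.hc0 w, S.hc1 w, S.hc2 w, S.hc3 w]

theorem ev_apply_nil (u : List Gen) : S.ev u [] = [] := by
  induction u with
  | nil => rfl
  | cons g u ih => rw [ev_cons, Equiv.Perm.mul_apply, ih, gen_apply_nil]

theorem ev_apply_cons (u : List Gen) (x : Alph) (w : Word) :
    S.ev u (x :: w) = permW u x :: S.ev (secW u x) w := by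
  induction u with
  | nil => rfl
  | cons g u ih =>
    rw [ev_cons, Equiv.Perm.mul_apply, ih, gen_apply_cons, permW, secW, ev_append,
      Equiv.Perm.mul_apply]

theorem ev_apply (u : List Gen) (w : Word) : S.ev u w = act u w := by
  induction w generalizing u with
  | nil => rw [ev_apply_nil, act]
  | cons x w ih => rw [ev_apply_cons, act, ih]

theorem length_ev_apply (u : List Gen) (w : Word) : (S.ev u w).length = w.length := by
  induction w generalizing u with
  | nil => rw [ev_apply_nil]
  | cons x w ih => rw [ev_apply_cons, List.length_cons, List.length_cons, ih]

/-- All relations hold on the words of length `n`. -/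
def Good (n : ℕ) : Prop :=
  ∀ (g : Gen) (l r : List Gen), (l, r) ∈ g.rules → ∀ w : Word, w.length = n →
    S.ev (g :: l) w = S.ev r w

variable {S}

/-- Folding preserves any equality of actions on words of length `n` that the individual steps
preserve. -/
theorem Good.foldr_apply {n : ℕ} {f : Gen → List Gen → List Gen}
    (hf : ∀ x u w, List.length w = n → S.ev (f x u) w = S.ev (x :: u) w)
    (g u : List Gen) (w : Word) (hw : w.length = n) :
    S.ev (g.foldr f u) w = S.ev (g ++ u) w := by
  induction g with
  | nil => rfl
  | cons x g ih =>
    rw [List.foldr_cons, hf _ _ _ hw, ev_cons, Equiv.Perm.mul_apply, ih, List.cons_append, ev_cons,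
      Equiv.Perm.mul_apply]

theorem Good.push_apply {n : ℕ} (h : S.Good n) (k : ℕ) (x : Gen) (u : List Gen) (w : Word)
    (hw : w.length = n) : S.ev (push k x u) w = S.ev (x :: u) w := by
  induction k generalizing x u w with
  | zero => rfl
  | succ k ih =>
    rw [push]
    cases hr : findRule x.rules u with
    | none => rfl
    | some q =>
      obtain ⟨r, v⟩ := q
      obtain ⟨l, hl, rfl⟩ := findRule_eq hr
      change S.ev (r.foldr (push k) v) w = _
      rw [Good.foldr_apply ih r v w hw, ← List.cons_append, ev_append, ev_append,
        Equiv.Perm.mul_apply, Equiv.Perm.mul_apply]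
      -- the relation is applied at `S.ev v w`, which has the same length as `w`
      exact (h x l r hl _ (by rw [length_ev_apply, hw])).symm

theorem Good.mulRed_apply {n : ℕ} (h : S.Good n) (g u : List Gen) (w : Word)
    (hw : w.length = n) : S.ev (mulRed g u) w = S.ev (g ++ u) w :=
  Good.foldr_apply (fun x u w hw => h.push_apply 40 x u w hw) g u w hw

variable (S)

/-- The induction on the length of the argument proving all relations simultaneously. -/
theorem good_all (n : ℕ) : S.Good n := by
  induction n with
  | zero =>
    intro g l r _ w hw
    rw [List.length_eq_zero_iff.1 hw, ev_apply_nil, ev_apply_nil]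
  | succ n ih =>
    intro g l r hr w hw
    obtain ⟨x, w, rfl⟩ := List.exists_cons_of_length_eq_add_one hw
    have hw' : w.length = n := by simpa using hw
    have key := List.all_eq_true.1 (List.all_eq_true.1 (rules_check g) _ hr) x (List.mem_finRange x)
    simp only [Bool.and_eq_true, beq_iff_eq] at key
    have e (u : List Gen) : S.ev u w = S.ev (red u) w := by
      rw [red, ih.mulRed_apply u [] w hw', List.append_nil]
    rw [ev_apply_cons, ev_apply_cons, key.1, e, key.2, ← e]

theorem ev_mulRed (g u : List Gen) : S.ev (mulRed g u) = S.ev g * S.ev u := by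
  ext1 w
  rw [(S.good_all w.length).mulRed_apply g u w rfl, ev_append]

theorem ev_red (u : List Gen) : S.ev (red u) = S.ev u := by
  rw [red, ev_mulRed, ev_nil, mul_one]

end NekSystem

/-! ### Fast membership tests -/

/-- An injective encoding of words by numbers, in base 8. -/
def key : List Gen → ℕ
  | [] => 0
  | x :: u => 8 * key u + x.idx

theorem key_injective : Function.Injective key := by
  intro u
  induction u with
  | nil =>
    rintro (_ | ⟨y, v⟩) h
    · rfl
    · have := y.idx_bounds
      simp only [key] at h
      omega
  | cons x u ih =>
    have hx := x.idx_bounds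
    rintro (_ | ⟨y, v⟩) h
    · simp only [key] at h
      omega
    · have hy := y.idx_bounds
      simp only [key] at h
      rw [ih (a₂ := v) (by omega), Gen.idx_injective (a₁ := x) (a₂ := y) (by omega)]

/-- Membership in a list of numbers. -/
def memN (n : ℕ) : List ℕ → Bool
  | [] => false
  | m :: l => (Nat.beq n m).or (memN n l)

theorem memN_iff {n : ℕ} {l : List ℕ} : memN n l = true ↔ n ∈ l := by
  induction l with
  | nil => simp [memN]
  | cons m l ih => rw [memN, Bool.or_eq_true, ih, Nat.beq_eq, List.mem_cons]

theorem memN_key_iff {u : List Gen} {l : List (List Gen)} :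
    memN (key u) (l.map key) = true ↔ u ∈ l := by
  rw [memN_iff, List.mem_map_of_injective key_injective]

/-- Test for a list of numbers to have no repetitions. -/
def nodupN : List ℕ → Bool
  | [] => true
  | u :: l => (memN u l).not && nodupN l

theorem nodup_of_nodupN {l : List ℕ} (h : nodupN l = true) : l.Nodup := by
  induction l with
  | nil => exact List.nodup_nil
  | cons u l ih =>
    rw [nodupN, Bool.and_eq_true, Bool.not_eq_true', ← Bool.not_eq_true, memN_iff] at h
    exact List.nodup_cons.2 ⟨h.1, ih h.2⟩

/-- Removal of repetitions from a list of words. -/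
def nub : List (List Gen) → List (List Gen)
  | [] => []
  | u :: l => bif memN (key u) (l.map key) then nub l else u :: nub l

theorem mem_nub {u : List Gen} {l : List (List Gen)} : u ∈ nub l ↔ u ∈ l := by
  induction l with
  | nil => rfl
  | cons v l ih =>
    rw [nub]
    cases h : memN (key v) (l.map key) with
    | false => rw [cond_false, List.mem_cons, List.mem_cons, ih]
    | true =>
      rw [cond_true, ih, List.mem_cons, or_iff_right_of_imp]
      rintro rfl
      exact memN_key_iff.1 h

/-! ### Enumeration of the six subgroups -/

/-- The alternating word `x y x ⋯` with `n` factors. -/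
def alt : ℕ → List Gen → List Gen → List Gen
  | 0, _, _ => []
  | n + 1, x, y => x ++ alt n y x

/-- The alternating words in `x` and `y` with at most `m` factors, without the one with `m` factors
starting with `y`. If `x, y` are involutions with `(x y) ^ m = 1`, these are the elements of the
dihedral group they generate; for `m = 1` they are just `1` and `x`. -/
def dih (x y : List Gen) (m : ℕ) : List (List Gen) :=
  (List.range (m + 1)).map (fun i => alt i x y) ++
    (List.range (m - 1)).map (fun i => alt (i + 1) y x)

/-- All products of an element of `dih p q m` and an element of `dih r s k`. -/
def block (p q : List Gen) (m : ℕ) (r s : List Gen) (k : ℕ) : List (List Gen) :=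
  (dih p q m).flatMap fun u => (dih r s k).map fun v => u ++ v

/-- The words in `gs` are involutions and the list `L` of words is closed under left multiplication
by them, up to rewriting. -/
def closedCheck (gs L : List (List Gen)) : Bool :=
  let R := L.map red
  let K := R.map key
  gs.all fun g => (red (g ++ g)).isEmpty && R.all fun u => memN (key (mulRed g u)) K

namespace NekSystem

variable (S : NekSystem)

theorem ev_alt_mem {H : Subgroup (Equiv.Perm Word)} (n : ℕ) {x y : List Gen} (hx : S.ev x ∈ H)
    (hy : S.ev y ∈ H) : S.ev (alt n x y) ∈ H := by
  induction n generalizing x y with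
  | zero => exact H.one_mem
  | succ n ih =>
    rw [alt, ev_append]
    exact H.mul_mem hx (ih hy hx)

theorem ev_dih_mem {H : Subgroup (Equiv.Perm Word)} {m : ℕ} {x y u : List Gen} (hx : S.ev x ∈ H)
    (hy : S.ev y ∈ H) (hu : u ∈ dih x y m) : S.ev u ∈ H := by
  rw [dih, List.mem_append, List.mem_map, List.mem_map] at hu
  obtain ⟨i, _, rfl⟩ | ⟨i, _, rfl⟩ := hu
  · exact S.ev_alt_mem i hx hy
  · exact S.ev_alt_mem (i + 1) hy hx

theorem nil_mem_dih (x y : List Gen) (m : ℕ) : [] ∈ dih x y m :=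
  List.mem_append_left _ (List.mem_map.2 ⟨0, by simp, rfl⟩)

/-- A product set of two dihedral lists that is closed under left multiplication by the four
generators is the whole subgroup generated by them. -/
theorem closure_eq {p q r s : List Gen} {m k : ℕ}
    (h : closedCheck [p, q, r, s] (block p q m r s k) = true) :
    (Subgroup.closure {S.ev p, S.ev q, S.ev r, S.ev s} : Set (Equiv.Perm Word)) =
      {f | ∃ u ∈ (block p q m r s k).map red, S.ev u = f} := by
  have hcl (g) (hg : g ∈ [p, q, r, s]) := List.all_eq_true.1 h g hg
  simp only [Bool.and_eq_true, List.isEmpty_iff, List.all_eq_true, memN_key_iff] at hcl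
  have hgen : ∀ f ∈ ({S.ev p, S.ev q, S.ev r, S.ev s} : Set (Equiv.Perm Word)),
      ∃ g ∈ [p, q, r, s], S.ev g = f := by
    rintro f (rfl | rfl | rfl | rfl)
    exacts [⟨p, by simp, rfl⟩, ⟨q, by simp, rfl⟩, ⟨r, by simp, rfl⟩, ⟨s, by simp, rfl⟩]
  have hmul : ∀ f ∈ ({S.ev p, S.ev q, S.ev r, S.ev s} : Set (Equiv.Perm Word)), ∀ f',
      (∃ u ∈ (block p q m r s k).map red, S.ev u = f') →
      ∃ u ∈ (block p q m r s k).map red, S.ev u = f * f' := by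
    rintro f hf _ ⟨u, hu, rfl⟩
    obtain ⟨g, hg, rfl⟩ := hgen f hf
    exact ⟨_, (hcl g hg).2 u hu, S.ev_mulRed g u⟩
  have hinv : ∀ f ∈ ({S.ev p, S.ev q, S.ev r, S.ev s} : Set (Equiv.Perm Word)), f⁻¹ = f := by
    intro f hf
    obtain ⟨g, hg, rfl⟩ := hgen f hf
    rw [inv_eq_iff_mul_eq_one, ← ev_append, ← ev_red, (hcl g hg).1, ev_nil]
  apply Set.Subset.antisymm
  · intro f hf
    induction hf using Subgroup.closure_induction_left with
    | one =>
      refine ⟨red [], List.mem_map_of_mem ?_, rfl⟩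
      exact List.mem_flatMap.2 ⟨[], nil_mem_dih _ _ _, List.mem_map.2 ⟨[], nil_mem_dih _ _ _, rfl⟩⟩
    | mul_left x hx y _ ih => exact hmul x hx y ih
    | inv_mul_cancel x hx y _ ih =>
      rw [hinv x hx]
      exact hmul x hx y ih
  · rintro _ ⟨_, hu, rfl⟩
    obtain ⟨u, hu', rfl⟩ := List.mem_map.1 hu
    obtain ⟨u₁, h₁, hu₂⟩ := List.mem_flatMap.1 hu'
    obtain ⟨u₂, h₂, rfl⟩ := List.mem_map.1 hu₂
    rw [ev_red, ev_append]
    apply Subgroup.mul_mem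
    · exact S.ev_dih_mem (Subgroup.subset_closure (by simp)) (Subgroup.subset_closure (by simp)) h₁
    · exact S.ev_dih_mem (Subgroup.subset_closure (by simp)) (Subgroup.subset_closure (by simp)) h₂

end NekSystem

section Blocks

open Gen

/-- The elements of `Γ_A`. -/
def blockA : List (List Gen) := block [B] [C] 8 [b] [c] 4

/-- The elements of `Γ_B`. -/
def blockB : List (List Gen) := block [A] [C] 4 [a] [c] 2

/-- The elements of `Γ_C`. -/
def blockC : List (List Gen) := block [A] [B] 8 [a] [b] 4

/-- The elements of `Γ_{A₁}`. -/
def blockA₁ : List (List Gen) := block [A] [A] 1 [b] [c] 4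

/-- The elements of `Γ_{B₁}`. -/
def blockB₁ : List (List Gen) := block [B] [a] 2 [c, C] [c, C] 1

/-- The elements of `Γ_{C₁}`. -/
def blockC₁ : List (List Gen) := block [C] [C] 1 [a, A] [b, B] 4

theorem closed_blockA : closedCheck [[B], [C], [b], [c]] blockA = true := by decide +kernel

theorem closed_blockB : closedCheck [[A], [C], [a], [c]] blockB = true := by decide +kernel

theorem closed_blockC : closedCheck [[A], [B], [a], [b]] blockC = true := by decide +kernel

theorem closed_blockA₁ : closedCheck [[A], [A], [b], [c]] blockA₁ = true := by decide +kernel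

theorem closed_blockB₁ : closedCheck [[B], [a], [c, C], [c, C]] blockB₁ = true := by
  decide +kernel

theorem closed_blockC₁ : closedCheck [[C], [C], [a, A], [b, B]] blockC₁ = true := by
  decide +kernel

end Blocks

/-! ### Counting -/

/-- The normal forms of the elements of `N`, without repetitions. -/
def normalForms : List (List Gen) :=
  nub ((((((blockA ++ blockB) ++ blockC) ++ blockA₁) ++ blockB₁) ++ blockC₁).map red)

/-- The words of `X*` on which the elements of `N` are compared. -/
def testWords : List Word := [[0, 0, 0, 0, 0], [0, 1, 0, 0, 0], [1, 0, 0, 0, 0]]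

/-- The letters of all words in the list, read as the digits of a number in base 4. -/
def code (ws : List Word) : ℕ :=
  ws.flatten.foldl (fun n x => 4 * n + x.val) 0

theorem length_normalForms : normalForms.length = 288 := by decide +kernel

theorem nodup_codes :
    nodupN (normalForms.map fun u => code (testWords.map (act u))) = true := by decide +kernel

/-- Words of generators whose actions on the test words differ represent different bijections. -/
theorem NekSystem.nodup_map_ev (S : NekSystem) {L : List (List Gen)}
    (h : nodupN (L.map fun u => code (testWords.map (act u))) = true) : (L.map S.ev).Nodup := by
  apply List.Nodup.of_map (fun f : Equiv.Perm Word => code (testWords.map f))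
  rw [List.map_map]
  convert nodup_of_nodupN h using 3 with u
  exact congrArg code (List.map_congr_left fun w _ => S.ev_apply u w)

theorem NekSystem.nuc_eq (S : NekSystem) :
    Nuc S = {f | ∃ u ∈ normalForms, S.ev u = f} := by
  have hA := S.closure_eq closed_blockA
  have hB := S.closure_eq closed_blockB
  have hC := S.closure_eq closed_blockC
  have hA₁ := S.closure_eq closed_blockA₁
  have hB₁ := S.closure_eq closed_blockB₁
  have hC₁ := S.closure_eq closed_blockC₁
  simp only [ev_cons, ev_nil, mul_one, gen, Set.insert_idem, Set.pair_eq_singleton]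
    at hA hB hC hA₁ hB₁ hC₁
  rw [Nuc, hA, hB, hC, hA₁, hB₁, hC₁]
  ext f
  simp only [normalForms, mem_nub, List.map_append, List.mem_append, Set.mem_union,
    Set.mem_ofPred_eq, or_and_right, exists_or]
  rfl

/-- The set N has exactly 288 elements. -/
theorem statement6 (S : NekSystem) : (Nuc S).ncard = 288 := by
  classical
  have hnd := S.nodup_map_ev nodup_codes
  have hset : Nuc S = ((normalForms.map S.ev).toFinset : Set (Equiv.Perm Word)) := by
    ext f
    simp [S.nuc_eq]
  rw [hset, Set.ncard_coe_finset, List.toFinset_card_of_nodup hnd, List.length_map,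
    length_normalForms]
end
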